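/- Define h₋⁽¹⁾(x) := −Σ_{j=1}^∞ λ₋^{j−1} f₋(S₀^{−j} x), h₊⁽¹⁾(x) := Σ_{a=0}^∞ λ₊^{−(a+1)} f₊(S₀^a x), and h₊⁽²⁾(x) := Σ_{a≥0} Σ_{b≥0} λ₊^{−(a+1)} λ₊^{−(b+1)} (∂₊f₊)(S₀^a x) f₊(S₀^{a+b} x) + Σ_{a≥0} Σ_{b≤−1} (−λ₊^{−(a+1)} λ₋^{−b−1}) (∂₋f₊)(S₀^a x) f₋(S₀^{a+b} x), all series converging absolutely. For t > 0 and u : ℝ² → ℝ write Δ_t u(x) := (u(x + t v₋) − u(x))/t. Then for every x ∈ ℝ² the limit lim_{t→0⁺} [ Δ_t h₊⁽²⁾(x) − Δ_t h₊⁽¹⁾(x) · Δ_t h₋⁽¹⁾(x) ] exists and equals the sum of the following four absolutely convergent series: (1) Σ_{a≥0} Σ_{b≥0} λ₊^{−(a+1)} λ₊^{−(b+1)} λ₋^{a} (∂₋∂₊f₊)(S₀^a x) f₊(S₀^{a+b} x); (2) Σ_{a≥0} Σ_{b≥0} λ₊^{−(a+1)} λ₊^{−(b+1)} λ₋^{a+b}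 (∂₊f₊)(S₀^a x) (∂₋f₊)(S₀^{a+b} x); (3) Σ_{a≥0} Σ_{b≤−1} (−λ₊^{−(a+1)} λ₋^{−b−1} λ₋^{a}) (∂₋²f₊)(S₀^a x) f₋(S₀^{a+b} x); (4) Σ_{a≥0} Σ_{b=−a}^{−1} (−λ₊^{−(a+1)} λ₋^{a−1}) (∂₋f₊)(S₀^a x) (∂₋f₋)(S₀^{a+b} x). -/

import Mathlib

/-!
Along `v₋` the forward iterates of `S₀` contract, `S₀^a (x + t v₋) = S₀^a x + λ₋^a t v₋`, while the
backward iterates expand. Hence the first series of `h₊⁽²⁾` can be differentiated termwise along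
`v₋` by dominated convergence (`tendsto_forward`), giving the series (1) and (2).

In the second series, write `b = -(k+1)` and apply the discrete product rule (`quot_backward`).
The part where the difference falls on `∂₋f₊(S₀^a x)` converges to (3) (`tendsto_series3`), and the
part where it falls on `f₋(S₀^{a+b} x)` with `a + b ≥ 0` converges to (4) (`tendsto_series4`). For
`a + b < 0` the substitution `k = a + j` factors the double sum as `D · Δ_t h₋⁽¹⁾(x)`, where
`D = Σ_a λ₊^{-(a+1)} λ₋^a ∂₋f₊(S₀^a x)` is the derivative of `h₊⁽¹⁾` along `v₋`
(`series_resonant`). This part need not converge as `t → 0⁺`, but after subtracting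
`Δ_t h₊⁽¹⁾ · Δ_t h₋⁽¹⁾` there remains `(D - Δ_t h₊⁽¹⁾) · Δ_t h₋⁽¹⁾`. It tends to `0`, since
`D - Δ_t h₊⁽¹⁾ = O(t)` (`hp1_rate`) and `h₋⁽¹⁾` is continuous along `v₋` (`tendsto_hm1`).
-/

noncomputable section
open Real Filter Metric

/-- The two–torus `ℝ²/(2πℤ²)`. -/
abbrev T2 := AddCircle (2 * Real.pi) × AddCircle (2 * Real.pi)

/-- The quotient map `π : ℝ² → T²`. -/
def pr2 : ℝ × ℝ → T2 := fun p => ((p.1 : AddCircle (2 * Real.pi)), (p.2 : AddCircle (2 * Real.pi)))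

/-- The matrix `[[1,1],[1,0]]` acting on `ℝ²`. -/
def S0 : ℝ × ℝ → ℝ × ℝ := fun p => (p.1 + p.2, p.1)

def lamP : ℝ := (1 + Real.sqrt 5) / 2
def lamM : ℝ := (1 - Real.sqrt 5) / 2

/-- Unit eigenvector of `S0` proportional to `(λ₊, 1)`. -/
def vP : ℝ × ℝ := (lamP / Real.sqrt (lamP ^ 2 + 1), 1 / Real.sqrt (lamP ^ 2 + 1))
/-- Unit eigenvector of `S0` proportional to `(λ₋, 1)`. -/
def vM : ℝ × ℝ := (lamM / Real.sqrt (lamM ^ 2 + 1), 1 / Real.sqrt (lamM ^ 2 + 1))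

/-- Euclidean dot product on `ℝ²`. -/
def dot (a b : ℝ × ℝ) : ℝ := a.1 * b.1 + a.2 * b.2

/-- `g : ℝ² → ℝ` is a (real-valued) trigonometric polynomial. -/
def IsTrigPoly (g : ℝ × ℝ → ℝ) : Prop :=
  ∃ (s : Finset (ℤ × ℤ)) (c : ℤ × ℤ → ℂ), ∀ p : ℝ × ℝ,
    (g p : ℂ) = ∑ n ∈ s, c n * Complex.exp (Complex.I * ((n.1 : ℂ) * p.1 + (n.2 : ℂ) * p.2))


def S0inv : ℝ × ℝ → ℝ × ℝ := fun p => (p.2, p.1 - p.2)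

/-- `S₀^n` for an integer exponent `n`. -/
def S0z : ℤ → (ℝ × ℝ) → (ℝ × ℝ) := fun n => if 0 ≤ n then S0^[n.toNat] else S0inv^[(-n).toNat]

/-- the component `f₊ = f·v₊` of `f` along `v₊` -/
def fP (f : ℝ × ℝ → ℝ × ℝ) (p : ℝ × ℝ) : ℝ := dot (f p) vP
/-- the component `f₋ = f·v₋` of `f` along `v₋` -/
def fM (f : ℝ × ℝ → ℝ × ℝ) (p : ℝ × ℝ) : ℝ := dot (f p) vM
/-- the directional derivative `∂₋u` along `v₋` -/
def dMin (u : ℝ × ℝ → ℝ) (p : ℝ × ℝ) : ℝ := lineDeriv ℝ u p vM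
/-- the directional derivative `∂₊u` along `v₊` -/
def dPlu (u : ℝ × ℝ → ℝ) (p : ℝ × ℝ) : ℝ := lineDeriv ℝ u p vP

/-- `h₊⁽¹⁾(x) = Σ_{a≥0} λ₊^{-(a+1)} f₊(S₀^a x)` -/
def hp1 (f : ℝ × ℝ → ℝ × ℝ) (x : ℝ × ℝ) : ℝ := ∑' a : ℕ, (lamP ^ (a + 1))⁻¹ * fP f (S0^[a] x)

/-- `h₋⁽¹⁾(x) = −Σ_{j≥1} λ₋^{j-1} f₋(S₀^{-j} x)` -/
def hm1 (f : ℝ × ℝ → ℝ × ℝ) (x : ℝ × ℝ) : ℝ := -∑' j : ℕ, lamM ^ j * fM f (S0inv^[j + 1] x)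

/-- `h₊⁽²⁾`, the second order term; the sum over `b ≤ -1` is encoded by `b = -(k+1)`, `k : ℕ`. -/
def hp2 (f : ℝ × ℝ → ℝ × ℝ) (x : ℝ × ℝ) : ℝ :=
  (∑' ab : ℕ × ℕ, (lamP ^ (ab.1 + 1))⁻¹ * (lamP ^ (ab.2 + 1))⁻¹ *
      dPlu (fP f) (S0^[ab.1] x) * fP f (S0^[ab.1 + ab.2] x)) +
  (∑' ak : ℕ × ℕ, -((lamP ^ (ak.1 + 1))⁻¹ * lamM ^ ak.2 *
      dMin (fP f) (S0^[ak.1] x) * fM f (S0z ((ak.1 : ℤ) - ak.2 - 1) x)))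


/-! ### Trigonometric polynomials -/

lemma IsTrigPoly.mul_const {u : ℝ × ℝ → ℝ} (h : IsTrigPoly u) (k : ℝ) :
    IsTrigPoly (fun p => u p * k) := by
  obtain ⟨s, c, hc⟩ := h
  refine ⟨s, fun n => c n * k, fun p => ?_⟩
  push_cast
  rw [hc, Finset.sum_mul]
  exact Finset.sum_congr rfl fun n _ => by ring

lemma IsTrigPoly.add {u w : ℝ × ℝ → ℝ} (hu : IsTrigPoly u) (hw : IsTrigPoly w) :
    IsTrigPoly (fun p => u p + w p) := by
  classical
  obtain ⟨s, c, hc⟩ := hu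
  obtain ⟨s', c', hc'⟩ := hw
  refine ⟨s ∪ s', fun n => (if n ∈ s then c n else 0) + (if n ∈ s' then c' n else 0),
    fun p => ?_⟩
  push_cast
  rw [hc, hc']
  simp only [add_mul, Finset.sum_add_distrib, ite_mul, zero_mul, Finset.sum_ite_mem]
  rw [Finset.union_inter_cancel_left, Finset.union_inter_cancel_right]

lemma isTrigPoly_dot {f : ℝ × ℝ → ℝ × ℝ} (hf1 : IsTrigPoly (fun p => (f p).1))
    (hf2 : IsTrigPoly (fun p => (f p).2)) (v : ℝ × ℝ) : IsTrigPoly (fun p => dot (f p) v) :=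
  (hf1.mul_const v.1).add (hf2.mul_const v.2)

lemma IsTrigPoly.bounded {u : ℝ × ℝ → ℝ} (h : IsTrigPoly u) :
    ∃ C, 0 ≤ C ∧ ∀ p, |u p| ≤ C := by
  obtain ⟨s, c, hc⟩ := h
  refine ⟨∑ n ∈ s, ‖c n‖, Finset.sum_nonneg fun _ _ => norm_nonneg _, fun p => ?_⟩
  rw [← Real.norm_eq_abs, ← Complex.norm_real, hc]
  refine norm_sum_le_of_le _ fun n _ => ?_
  have : Complex.I * ((n.1 : ℂ) * p.1 + (n.2 : ℂ) * p.2)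
      = (((n.1 : ℝ) * p.1 + (n.2 : ℝ) * p.2 : ℝ) : ℂ) * Complex.I := by
    push_cast; ring
  rw [norm_mul, this, Complex.norm_exp_ofReal_mul_I, mul_one]

/-- Termwise differentiation along a line; the derivative is itself given by a trigonometric sum,
which is real because it is the derivative of a real-valued function. -/
lemma trig_hasDerivAt {u : ℝ × ℝ → ℝ} {s : Finset (ℤ × ℤ)} {c : ℤ × ℤ → ℂ}
    (hc : ∀ p : ℝ × ℝ, (u p : ℂ) =
      ∑ n ∈ s, c n * Complex.exp (Complex.I * ((n.1 : ℂ) * p.1 + (n.2 : ℂ) * p.2)))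
    (p v : ℝ × ℝ) (t : ℝ) :
    ∃ d : ℝ, HasDerivAt (fun t : ℝ => u (p + t • v)) d t ∧
      (d : ℂ) = ∑ n ∈ s, (c n * (Complex.I * ((n.1 : ℂ) * v.1 + (n.2 : ℂ) * v.2))) *
        Complex.exp (Complex.I * ((n.1 : ℂ) * ((p + t • v).1 : ℝ)
          + (n.2 : ℂ) * ((p + t • v).2 : ℝ))) := by
  have hF : HasDerivAt (fun t : ℝ => ((u (p + t • v) : ℝ) : ℂ))
      (∑ n ∈ s, (c n * (Complex.I * ((n.1 : ℂ) * v.1 + (n.2 : ℂ) * v.2))) *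
        Complex.exp (Complex.I * ((n.1 : ℂ) * ((p + t • v).1 : ℝ)
          + (n.2 : ℂ) * ((p + t • v).2 : ℝ)))) t := by
    simp only [hc]
    refine HasDerivAt.fun_sum fun n _ => ?_
    have hid : HasDerivAt (fun t : ℝ => (t : ℂ)) 1 t := Complex.ofRealCLM.hasDerivAt
    have h1 : HasDerivAt (fun t : ℝ => Complex.I * ((n.1 : ℂ) * ((p + t • v).1 : ℝ)
          + (n.2 : ℂ) * ((p + t • v).2 : ℝ)))
        (Complex.I * ((n.1 : ℂ) * v.1 + (n.2 : ℂ) * v.2)) t := by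
      have := ((hid.const_mul ((n.1 : ℂ) * v.1 + (n.2 : ℂ) * v.2)).const_add
        ((n.1 : ℂ) * p.1 + (n.2 : ℂ) * p.2)).const_mul Complex.I
      rw [mul_one] at this
      refine this.congr_of_eventuallyEq (Filter.Eventually.of_forall fun r => ?_)
      simp only [Prod.fst_add, Prod.snd_add, Prod.smul_fst, Prod.smul_snd, smul_eq_mul]
      push_cast
      ring
    exact (h1.cexp.const_mul (c n)).congr_deriv (by ring)
  have hre := (Complex.reCLM.hasFDerivAt.comp_hasDerivAt t hF)
  refine ⟨_, hre, ?_⟩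
  exact hre.ofReal_comp.unique hF

lemma IsTrigPoly.hasDerivAt_line {u : ℝ × ℝ → ℝ} (h : IsTrigPoly u) (p v : ℝ × ℝ) (t : ℝ) :
    HasDerivAt (fun t : ℝ => u (p + t • v)) (lineDeriv ℝ u (p + t • v) v) t := by
  obtain ⟨s, c, hc⟩ := h
  obtain ⟨d, hd, hd'⟩ := trig_hasDerivAt hc p v t
  obtain ⟨e, he, he'⟩ := trig_hasDerivAt hc (p + t • v) v 0
  have h1 : lineDeriv ℝ u (p + t • v) v = e := he.deriv
  have h2 : (e : ℂ) = d := by rw [he', hd']; simp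
  rw [h1, Complex.ofReal_injective h2]
  exact hd

lemma IsTrigPoly.lineDeriv {u : ℝ × ℝ → ℝ} (h : IsTrigPoly u) (v : ℝ × ℝ) :
    IsTrigPoly (fun p => lineDeriv ℝ u p v) := by
  obtain ⟨s, c, hc⟩ := h
  refine ⟨s, fun n => c n * (Complex.I * ((n.1 : ℂ) * v.1 + (n.2 : ℂ) * v.2)), fun p => ?_⟩
  obtain ⟨e, he, he'⟩ := trig_hasDerivAt hc p v 0
  have h1 : _root_.lineDeriv ℝ u p v = e := he.deriv
  beta_reduce
  rw [h1, he']
  simp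

lemma IsTrigPoly.dMin {u : ℝ × ℝ → ℝ} (h : IsTrigPoly u) : IsTrigPoly (dMin u) := h.lineDeriv vM

lemma IsTrigPoly.dPlu {u : ℝ × ℝ → ℝ} (h : IsTrigPoly u) : IsTrigPoly (dPlu u) := h.lineDeriv vP

lemma IsTrigPoly.hasDerivAt {u : ℝ × ℝ → ℝ} (h : IsTrigPoly u) (p : ℝ × ℝ) (t : ℝ) :
    HasDerivAt (fun t : ℝ => u (p + t • vM)) (_root_.dMin u (p + t • vM)) t :=
  h.hasDerivAt_line p vM t

lemma IsTrigPoly.lipschitz {u : ℝ × ℝ → ℝ} (h : IsTrigPoly u) :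
    ∃ C, 0 ≤ C ∧ ∀ p (s : ℝ), |u (p + s • vM) - u p| ≤ C * |s| := by
  obtain ⟨C, hC0, hC⟩ := h.dMin.bounded
  refine ⟨C, hC0, fun p s => ?_⟩
  have := convex_univ.norm_image_sub_le_of_norm_hasDerivWithin_le
    (f := fun t : ℝ => u (p + t • vM)) (C := C)
    (fun t _ => (h.hasDerivAt p t).hasDerivWithinAt) (fun t _ => hC _)
    (Set.mem_univ (0 : ℝ)) (Set.mem_univ s)
  simpa using this

lemma IsTrigPoly.taylor {u : ℝ × ℝ → ℝ} (h : IsTrigPoly u) :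
    ∃ C, 0 ≤ C ∧ ∀ p (s : ℝ), |u (p + s • vM) - u p - s * _root_.dMin u p| ≤ C * s ^ 2 := by
  obtain ⟨C, hC0, hC⟩ := h.dMin.lipschitz
  refine ⟨C, hC0, fun p s => ?_⟩
  have := (convex_closedBall (0 : ℝ) |s|).norm_image_sub_le_of_norm_hasDerivWithin_le
    (f := fun t : ℝ => u (p + t • vM) - t * _root_.dMin u p) (C := C * |s|)
    (fun t _ => ((h.hasDerivAt p t).sub
      ((hasDerivAt_id t).mul_const (_root_.dMin u p))).hasDerivWithinAt)
    (fun t ht => by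
      rw [one_mul, Real.norm_eq_abs]
      refine (hC p t).trans (mul_le_mul_of_nonneg_left ?_ hC0)
      simpa using ht)
    (x := 0) (y := s) (by simp) (by simp)
  simp only [zero_smul, add_zero, zero_mul, sub_zero, Real.norm_eq_abs] at this
  rw [mul_assoc, abs_mul_abs_self, ← pow_two] at this
  convert this using 2
  ring

lemma IsTrigPoly.tendsto {u : ℝ × ℝ → ℝ} (h : IsTrigPoly u) (p : ℝ × ℝ) (α : ℝ) :
    Tendsto (fun t : ℝ => u (p + (α * t) • vM)) (nhdsWithin 0 (Set.Ioi 0)) (nhds (u p)) := by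
  have h1 : Tendsto (fun s : ℝ => u (p + s • vM)) (nhds 0) (nhds (u p)) := by
    simpa using (h.hasDerivAt p 0).continuousAt.tendsto
  have h2 : Tendsto (fun t : ℝ => α * t) (nhdsWithin 0 (Set.Ioi 0)) (nhds 0) := by
    have : Tendsto (fun t : ℝ => α * t) (nhds 0) (nhds (α * 0)) :=
      (continuous_const.mul continuous_id).tendsto 0
    rw [mul_zero] at this
    exact this.mono_left nhdsWithin_le_nhds
  exact h1.comp h2

lemma IsTrigPoly.tendsto_quot {u : ℝ × ℝ → ℝ} (h : IsTrigPoly u) (p : ℝ × ℝ) (α : ℝ) :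
    Tendsto (fun t : ℝ => (u (p + (α * t) • vM) - u p) / t) (nhdsWithin 0 (Set.Ioi 0))
      (nhds (α * _root_.dMin u p)) := by
  have h0 : HasDerivAt (fun t : ℝ => u (p + t • vM)) (_root_.dMin u p) (α * 0) := by
    simpa using h.hasDerivAt p 0
  have h1 := (h0.comp (0 : ℝ) ((hasDerivAt_id (0 : ℝ)).const_mul α)).tendsto_slope_zero_right
  simp only [Function.comp_def, zero_add, mul_zero, zero_smul, add_zero, smul_eq_mul,
    mul_one] at h1
  rw [mul_comm α]
  refine h1.congr fun t => ?_
  rw [div_eq_inv_mul]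

lemma IsTrigPoly.quot_bound {u : ℝ × ℝ → ℝ} (h : IsTrigPoly u) :
    ∃ C, 0 ≤ C ∧ ∀ p (α t : ℝ), 0 < t → |(u (p + (α * t) • vM) - u p) / t| ≤ C * |α| := by
  obtain ⟨C, hC0, hC⟩ := h.lipschitz
  refine ⟨C, hC0, fun p α t ht => ?_⟩
  rw [abs_div, abs_of_pos ht, div_le_iff₀ ht]
  refine (hC _ _).trans (le_of_eq ?_)
  rw [abs_mul, abs_of_pos ht]; ring

/-! ### The hyperbolic dynamics along the stable direction -/

lemma lamM_sq : lamM ^ 2 = lamM + 1 := by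
  have : Real.sqrt 5 ^ 2 = 5 := Real.sq_sqrt (by norm_num)
  unfold lamM; nlinarith

lemma lamP_mul_lamM : lamP * lamM = -1 := by
  have : Real.sqrt 5 ^ 2 = 5 := Real.sq_sqrt (by norm_num)
  unfold lamM lamP; nlinarith

lemma one_lt_lamP : 1 < lamP := by
  have : (1 : ℝ) < Real.sqrt 5 := Real.lt_sqrt_of_sq_lt (by norm_num)
  unfold lamP; linarith

lemma lamM_ne : lamM ≠ 0 := by
  intro h; have := lamP_mul_lamM; simp [h] at this

/-- The common contraction rate `λ₊⁻¹ = |λ₋|`. -/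
def rr : ℝ := lamP⁻¹

lemma rr_pos : 0 < rr := inv_pos.2 (zero_lt_one.trans one_lt_lamP)

lemma rr_lt : rr < 1 := inv_lt_one_of_one_lt₀ one_lt_lamP

lemma abs_lamM : |lamM| = rr := by
  have h0 : (0 : ℝ) < lamP := zero_lt_one.trans one_lt_lamP
  have : lamM = -rr := by
    unfold rr; field_simp; linarith [lamP_mul_lamM]
  rw [this, abs_neg, abs_of_pos rr_pos]

lemma abs_lamM_pow (n : ℕ) : |lamM ^ n| = rr ^ n := by rw [abs_pow, abs_lamM]

lemma abs_lamM_pow_le_one (n : ℕ) : |lamM ^ n| ≤ 1 := by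
  rw [abs_lamM_pow]; exact pow_le_one₀ rr_pos.le rr_lt.le

lemma abs_lamP_inv (n : ℕ) : |(lamP ^ (n + 1))⁻¹| ≤ rr ^ n := by
  rw [← inv_pow, show lamP⁻¹ = rr from rfl, abs_of_nonneg (pow_nonneg rr_pos.le _)]
  exact pow_le_pow_of_le_one rr_pos.le rr_lt.le (Nat.le_succ n)

lemma S0_line (x : ℝ × ℝ) (t : ℝ) : S0 (x + t • vM) = S0 x + (lamM * t) • vM := by
  have := lamM_sq
  ext
  · simp only [S0, vM, Prod.fst_add, Prod.snd_add, Prod.smul_fst, Prod.smul_snd, smul_eq_mul]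
    linear_combination (-(t / Real.sqrt (lamM ^ 2 + 1))) * this
  · simp only [S0, vM, Prod.fst_add, Prod.snd_add, Prod.smul_fst, Prod.smul_snd, smul_eq_mul]
    ring

lemma S0inv_line (x : ℝ × ℝ) (t : ℝ) :
    S0inv (x + t • vM) = S0inv x + (lamM⁻¹ * t) • vM := by
  have h1 : lamM⁻¹ = lamM - 1 := by
    have := lamM_sq
    field_simp [lamM_ne]
    linarith
  have := lamM_sq
  rw [h1]
  ext
  · simp only [S0inv, vM, Prod.fst_add, Prod.snd_add, Prod.smul_fst, Prod.smul_snd, smul_eq_mul]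
    linear_combination (-(t / Real.sqrt (lamM ^ 2 + 1))) * this
  · simp only [S0inv, vM, Prod.fst_add, Prod.snd_add, Prod.smul_fst, Prod.smul_snd, smul_eq_mul]
    ring

lemma S0_iter_line (x : ℝ × ℝ) (t : ℝ) (n : ℕ) :
    S0^[n] (x + t • vM) = S0^[n] x + (lamM ^ n * t) • vM := by
  induction n with
  | zero => simp
  | succ n ih =>
    rw [Function.iterate_succ_apply', ih, S0_line, Function.iterate_succ_apply']
    ring_nf

lemma S0inv_iter_line (x : ℝ × ℝ) (t : ℝ) (n : ℕ) :
    S0inv^[n] (x + t • vM) = S0inv^[n] x + (lamM⁻¹ ^ n * t) • vM := by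
  induction n with
  | zero => simp
  | succ n ih =>
    rw [Function.iterate_succ_apply', ih, S0inv_line, Function.iterate_succ_apply']
    ring_nf

lemma S0z_of_lt {a k : ℕ} (h : k + 1 ≤ a) : S0z ((a : ℤ) - k - 1) = S0^[a - (k + 1)] := by
  unfold S0z
  rw [if_pos (by omega)]
  congr 1
  omega

lemma S0z_of_ge (a j : ℕ) : S0z ((a : ℤ) - (a + j : ℕ) - 1) = S0inv^[j + 1] := by
  unfold S0z
  rw [if_neg (by omega)]
  congr 1
  omega

/-- Every integer power of `S₀` acts on stable lines as some scaling. -/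
lemma S0z_line (a k : ℕ) : ∃ β : ℝ, ∀ (x : ℝ × ℝ) (t : ℝ),
    S0z ((a : ℤ) - k - 1) (x + t • vM) = S0z ((a : ℤ) - k - 1) x + (β * t) • vM := by
  by_cases h : k + 1 ≤ a
  · exact ⟨_, fun x t => by rw [S0z_of_lt h, S0_iter_line]⟩
  · obtain ⟨j, rfl⟩ := Nat.exists_eq_add_of_le (show a ≤ k by omega)
    exact ⟨_, fun x t => by rw [S0z_of_ge, S0inv_iter_line]⟩

/-! ### Summation tools -/

lemma summable_rr : Summable fun n : ℕ => rr ^ n :=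
  summable_geometric_of_lt_one rr_pos.le rr_lt

lemma summable_rr2 (C : ℝ) : Summable fun ab : ℕ × ℕ => C * (rr ^ ab.1 * rr ^ ab.2) :=
  (summable_rr.mul_of_nonneg summable_rr (fun _ => pow_nonneg rr_pos.le _)
    (fun _ => pow_nonneg rr_pos.le _)).mul_left C

lemma summable_abs_of_bound {F : ℕ × ℕ → ℝ} {C : ℝ}
    (h : ∀ ab, |F ab| ≤ C * (rr ^ ab.1 * rr ^ ab.2)) : Summable fun ab => |F ab| :=
  Summable.of_nonneg_of_le (fun _ => abs_nonneg _) h (summable_rr2 C)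

lemma abs_prod4_le {a b : ℕ} {c d P Q A B : ℝ} (hc : |c| ≤ rr ^ a) (hd : |d| ≤ rr ^ b)
    (hP : |P| ≤ A) (hQ : |Q| ≤ B) : |c * d * P * Q| ≤ A * B * (rr ^ a * rr ^ b) := by
  have h1 : |c| * |d| ≤ rr ^ a * rr ^ b :=
    mul_le_mul hc hd (abs_nonneg _) (pow_nonneg rr_pos.le _)
  have h2 : |P| * |Q| ≤ A * B :=
    mul_le_mul hP hQ (abs_nonneg _) ((abs_nonneg _).trans hP)
  calc |c * d * P * Q| = (|P| * |Q|) * (|c| * |d|) := by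
        rw [abs_mul, abs_mul, abs_mul]; ring
    _ ≤ A * B * (rr ^ a * rr ^ b) :=
        mul_le_mul h2 h1 (by positivity) ((by positivity : 0 ≤ |P| * |Q|).trans h2)

/-! ### Absolute convergence -/


lemma summable_hp1 {P : ℝ × ℝ → ℝ} (hP : IsTrigPoly P) (y : ℝ × ℝ) :
    Summable fun a : ℕ => |(lamP ^ (a + 1))⁻¹ * P (S0^[a] y)| := by
  obtain ⟨A, hA0, hA⟩ := hP.bounded
  refine Summable.of_nonneg_of_le (fun _ => abs_nonneg _) (fun a => ?_) (summable_rr.mul_right A)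
  rw [abs_mul]
  exact mul_le_mul (abs_lamP_inv a) (hA _) (abs_nonneg _) (pow_nonneg rr_pos.le _)

lemma summable_hm1 {P : ℝ × ℝ → ℝ} (hP : IsTrigPoly P) (y : ℝ × ℝ) :
    Summable fun j : ℕ => |lamM ^ j * P (S0inv^[j + 1] y)| := by
  obtain ⟨A, hA0, hA⟩ := hP.bounded
  refine Summable.of_nonneg_of_le (fun _ => abs_nonneg _) (fun a => ?_) (summable_rr.mul_right A)
  rw [abs_mul, abs_lamM_pow]
  exact mul_le_mul_of_nonneg_left (hA _) (pow_nonneg rr_pos.le _)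

lemma summable_D {P : ℝ × ℝ → ℝ} (hP : IsTrigPoly P) (y : ℝ × ℝ) :
    Summable fun a : ℕ => ‖(lamP ^ (a + 1))⁻¹ * (lamM ^ a * P (S0^[a] y))‖ := by
  refine Summable.of_nonneg_of_le (fun _ => norm_nonneg _) (fun a => ?_) (summable_hp1 hP y)
  rw [Real.norm_eq_abs, abs_mul, abs_mul, abs_mul]
  exact mul_le_mul_of_nonneg_left
    (mul_le_of_le_one_left (abs_nonneg _) (abs_lamM_pow_le_one _)) (abs_nonneg _)

lemma summable_forward {P Q : ℝ × ℝ → ℝ} (hP : IsTrigPoly P) (hQ : IsTrigPoly Q) (y : ℝ × ℝ) :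
    Summable fun ab : ℕ × ℕ => |(lamP ^ (ab.1 + 1))⁻¹ * (lamP ^ (ab.2 + 1))⁻¹ *
        P (S0^[ab.1] y) * Q (S0^[ab.1 + ab.2] y)| := by
  obtain ⟨A, hA0, hA⟩ := hP.bounded
  obtain ⟨B, hB0, hB⟩ := hQ.bounded
  exact summable_abs_of_bound fun ab =>
    abs_prod4_le (abs_lamP_inv _) (abs_lamP_inv _) (hA _) (hB _)

lemma summable_backward {P Q : ℝ × ℝ → ℝ} (hP : IsTrigPoly P) (hQ : IsTrigPoly Q)
    (y z : ℝ × ℝ) :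
    Summable fun ak : ℕ × ℕ => |(lamP ^ (ak.1 + 1))⁻¹ * lamM ^ ak.2 *
        P (S0^[ak.1] y) * Q (S0z ((ak.1 : ℤ) - ak.2 - 1) z)| := by
  obtain ⟨A, hA0, hA⟩ := hP.bounded
  obtain ⟨B, hB0, hB⟩ := hQ.bounded
  exact summable_abs_of_bound fun ab =>
    abs_prod4_le (abs_lamP_inv _) (abs_lamM_pow _).le (hA _) (hB _)

/-- An extra factor `λ₋ⁿ` does not affect absolute convergence. -/
lemma summable_abs_lamM {c P Q : ℕ × ℕ → ℝ} (h : Summable fun i => |c i * P i * Q i|)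
    (n : ℕ × ℕ → ℕ) : Summable fun i => |c i * lamM ^ n i * P i * Q i| := by
  refine Summable.of_nonneg_of_le (fun _ => abs_nonneg _) (fun i => ?_) h
  rw [show c i * lamM ^ n i * P i * Q i = lamM ^ n i * (c i * P i * Q i) by ring, abs_mul]
  exact mul_le_of_le_one_left (abs_nonneg _) (abs_lamM_pow_le_one _)

lemma summable_series1 {P Q : ℝ × ℝ → ℝ} (hP : IsTrigPoly P) (hQ : IsTrigPoly Q) (x : ℝ × ℝ) :
    Summable fun ab : ℕ × ℕ => |(lamP ^ (ab.1 + 1))⁻¹ * (lamP ^ (ab.2 + 1))⁻¹ * lamM ^ ab.1 *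
          P (S0^[ab.1] x) * Q (S0^[ab.1 + ab.2] x)| :=
  summable_abs_lamM (summable_forward hP hQ x) fun ab => ab.1

lemma summable_series2 {P Q : ℝ × ℝ → ℝ} (hP : IsTrigPoly P) (hQ : IsTrigPoly Q) (x : ℝ × ℝ) :
    Summable fun ab : ℕ × ℕ =>
      |(lamP ^ (ab.1 + 1))⁻¹ * (lamP ^ (ab.2 + 1))⁻¹ * lamM ^ (ab.1 + ab.2) *
          P (S0^[ab.1] x) * Q (S0^[ab.1 + ab.2] x)| :=
  summable_abs_lamM (summable_forward hP hQ x) fun ab => ab.1 + ab.2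

lemma summable_series3 {P Q : ℝ × ℝ → ℝ} (hP : IsTrigPoly P) (hQ : IsTrigPoly Q) (x : ℝ × ℝ) :
    Summable fun ak : ℕ × ℕ => |(lamP ^ (ak.1 + 1))⁻¹ * lamM ^ ak.2 * lamM ^ ak.1 *
          P (S0^[ak.1] x) * Q (S0z ((ak.1 : ℤ) - ak.2 - 1) x)| :=
  summable_abs_lamM (summable_backward hP hQ x x) fun ak => ak.1

lemma summable_series4 {P Q : ℝ × ℝ → ℝ} (hP : IsTrigPoly P) (hQ : IsTrigPoly Q) (x : ℝ × ℝ) :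
    Summable fun aj : ℕ × ℕ => |if aj.2 + 1 ≤ aj.1 then
            -((lamP ^ (aj.1 + 1))⁻¹ * lamM ^ (aj.1 - 1) *
              P (S0^[aj.1] x) * Q (S0^[aj.1 - (aj.2 + 1)] x))
          else 0| := by
  obtain ⟨A, hA0, hA⟩ := hP.bounded
  obtain ⟨B, hB0, hB⟩ := hQ.bounded
  refine summable_abs_of_bound (C := A * B) fun aj => ?_
  have := rr_pos
  split_ifs with h
  · rw [abs_neg]
    refine abs_prod4_le (abs_lamP_inv _) ?_ (hA _) (hB _)
    rw [abs_lamM_pow]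
    exact pow_le_pow_of_le_one rr_pos.le rr_lt.le (by omega)
  · rw [abs_zero]
    positivity


/-! ### Limits of the difference quotients -/

/-- Dominated convergence for a difference quotient of a series. -/
lemma tendsto_quot_tsum {ι : Type*} {F : ι → ℝ → ℝ} {F₀ L bound : ι → ℝ}
    (hF : ∀ t, Summable fun i => F i t) (hF₀ : Summable F₀) (hb : Summable bound)
    (hbd : ∀ i t, 0 < t → |(F i t - F₀ i) / t| ≤ bound i)
    (hL : ∀ i, Tendsto (fun t => (F i t - F₀ i) / t) (nhdsWithin 0 (Set.Ioi 0)) (nhds (L i))) :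
    Tendsto (fun t => ((∑' i, F i t) - ∑' i, F₀ i) / t) (nhdsWithin 0 (Set.Ioi 0))
      (nhds (∑' i, L i)) := by
  have := tendsto_tsum_of_dominated_convergence (𝓕 := nhdsWithin (0 : ℝ) (Set.Ioi 0))
    (f := fun t i => (F i t - F₀ i) / t) (g := L) hb hL
    (by filter_upwards [self_mem_nhdsWithin] with t ht i using hbd i t ht)
  refine this.congr fun t => ?_
  rw [tsum_div_const, (hF t).tsum_sub hF₀]

/-- The difference quotient of a double series whose terms only involve forward iterates: both
factors contract along `v₋`, so it converges to the termwise derivative. -/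
lemma tendsto_forward {P Q : ℝ × ℝ → ℝ} (hP : IsTrigPoly P) (hQ : IsTrigPoly Q) (x : ℝ × ℝ) :
    Tendsto (fun t : ℝ =>
      ((∑' ab : ℕ × ℕ, (lamP ^ (ab.1 + 1))⁻¹ * (lamP ^ (ab.2 + 1))⁻¹ *
          P (S0^[ab.1] (x + t • vM)) * Q (S0^[ab.1 + ab.2] (x + t • vM))) -
        ∑' ab : ℕ × ℕ, (lamP ^ (ab.1 + 1))⁻¹ * (lamP ^ (ab.2 + 1))⁻¹ *
          P (S0^[ab.1] x) * Q (S0^[ab.1 + ab.2] x)) / t)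
      (nhdsWithin 0 (Set.Ioi 0))
      (nhds ((∑' ab : ℕ × ℕ, (lamP ^ (ab.1 + 1))⁻¹ * (lamP ^ (ab.2 + 1))⁻¹ * lamM ^ ab.1 *
          dMin P (S0^[ab.1] x) * Q (S0^[ab.1 + ab.2] x)) +
        ∑' ab : ℕ × ℕ, (lamP ^ (ab.1 + 1))⁻¹ * (lamP ^ (ab.2 + 1))⁻¹ * lamM ^ (ab.1 + ab.2) *
          P (S0^[ab.1] x) * dMin Q (S0^[ab.1 + ab.2] x))) := by
  obtain ⟨A, hA0, hA⟩ := hP.bounded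
  obtain ⟨B, hB0, hB⟩ := hQ.bounded
  obtain ⟨Aq, hAnn, hAq⟩ := hP.quot_bound
  obtain ⟨Bq, hBnn, hBq⟩ := hQ.quot_bound
  have e : ∀ (ab : ℕ × ℕ) (t : ℝ),
      ((lamP ^ (ab.1 + 1))⁻¹ * (lamP ^ (ab.2 + 1))⁻¹ *
          P (S0^[ab.1] (x + t • vM)) * Q (S0^[ab.1 + ab.2] (x + t • vM)) -
        (lamP ^ (ab.1 + 1))⁻¹ * (lamP ^ (ab.2 + 1))⁻¹ *
          P (S0^[ab.1] x) * Q (S0^[ab.1 + ab.2] x)) / t =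
      (lamP ^ (ab.1 + 1))⁻¹ * (lamP ^ (ab.2 + 1))⁻¹ *
        ((P (S0^[ab.1] x + (lamM ^ ab.1 * t) • vM) - P (S0^[ab.1] x)) / t) *
          Q (S0^[ab.1 + ab.2] x + (lamM ^ (ab.1 + ab.2) * t) • vM) +
      (lamP ^ (ab.1 + 1))⁻¹ * (lamP ^ (ab.2 + 1))⁻¹ * P (S0^[ab.1] x) *
        ((Q (S0^[ab.1 + ab.2] x + (lamM ^ (ab.1 + ab.2) * t) • vM) - Q (S0^[ab.1 + ab.2] x)) / t)
      := by
    intro ab t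
    rw [S0_iter_line, S0_iter_line]
    ring
  have hs : ∀ y, Summable fun ab : ℕ × ℕ => (lamP ^ (ab.1 + 1))⁻¹ * (lamP ^ (ab.2 + 1))⁻¹ *
          P (S0^[ab.1] y) * Q (S0^[ab.1 + ab.2] y) := fun y =>
    (summable_abs_of_bound fun ab =>
      abs_prod4_le (abs_lamP_inv _) (abs_lamP_inv _) (hA _) (hB _)).of_abs
  rw [← Summable.tsum_add]
  · refine tendsto_quot_tsum (fun t => hs _) (hs x)
      (summable_rr2 (Aq * B + A * Bq)) ?_ ?_
    · intro ab t ht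
      rw [e]
      have hle : ∀ {C : ℝ} {n : ℕ}, 0 ≤ C → C * |lamM ^ n| ≤ C := fun h =>
        mul_le_of_le_one_right h (abs_lamM_pow_le_one _)
      refine (abs_add_le _ _).trans ?_
      rw [add_mul]
      exact add_le_add
        (abs_prod4_le (abs_lamP_inv _) (abs_lamP_inv _) ((hAq _ _ _ ht).trans (hle hAnn)) (hB _))
        (abs_prod4_le (abs_lamP_inv _) (abs_lamP_inv _) (hA _) ((hBq _ _ _ ht).trans (hle hBnn)))
    · intro ab
      simp only [e]
      have h1 := ((hP.tendsto_quot (S0^[ab.1] x) (lamM ^ ab.1)).const_mul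
        ((lamP ^ (ab.1 + 1))⁻¹ * (lamP ^ (ab.2 + 1))⁻¹)).mul
        (hQ.tendsto (S0^[ab.1 + ab.2] x) (lamM ^ (ab.1 + ab.2)))
      have h2 := (hQ.tendsto_quot (S0^[ab.1 + ab.2] x) (lamM ^ (ab.1 + ab.2))).const_mul
        ((lamP ^ (ab.1 + 1))⁻¹ * (lamP ^ (ab.2 + 1))⁻¹ * P (S0^[ab.1] x))
      convert h1.add h2 using 2
      ring
  · exact (summable_series1 hP.dMin hQ x).of_abs
  · exact (summable_series2 hP hQ.dMin x).of_abs

/-- The part of the second series of `h₊⁽²⁾` where the difference quotient falls on the forward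
factor `g(S₀^a x)`. -/
lemma tendsto_series3 {G W : ℝ × ℝ → ℝ} (hG : IsTrigPoly G) (hW : IsTrigPoly W) (x : ℝ × ℝ) :
    Tendsto (fun t : ℝ => ∑' ak : ℕ × ℕ, -((lamP ^ (ak.1 + 1))⁻¹ * lamM ^ ak.2 *
        ((G (S0^[ak.1] (x + t • vM)) - G (S0^[ak.1] x)) / t) *
          W (S0z ((ak.1 : ℤ) - ak.2 - 1) (x + t • vM))))
      (nhdsWithin 0 (Set.Ioi 0))
      (nhds (∑' ak : ℕ × ℕ, -((lamP ^ (ak.1 + 1))⁻¹ * lamM ^ ak.2 * lamM ^ ak.1 *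
          dMin G (S0^[ak.1] x) * W (S0z ((ak.1 : ℤ) - ak.2 - 1) x)))) := by
  obtain ⟨A, hA0, hA⟩ := hG.quot_bound
  obtain ⟨B, hB0, hB⟩ := hW.bounded
  refine tendsto_tsum_of_dominated_convergence (summable_rr2 (A * B)) ?_ ?_
  · intro ak
    obtain ⟨β, hβ⟩ := S0z_line ak.1 ak.2
    simp only [hβ, S0_iter_line]
    convert (((hG.tendsto_quot (S0^[ak.1] x) (lamM ^ ak.1)).const_mul
      ((lamP ^ (ak.1 + 1))⁻¹ * lamM ^ ak.2)).mul
      (hW.tendsto (S0z ((ak.1 : ℤ) - ak.2 - 1) x) β)).neg using 2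
    ring
  · filter_upwards [self_mem_nhdsWithin] with t ht ak
    rw [norm_neg, Real.norm_eq_abs, S0_iter_line]
    exact abs_prod4_le (abs_lamP_inv _) (abs_lamM_pow _).le
      ((hA _ _ _ ht).trans (mul_le_of_le_one_right hA0 (abs_lamM_pow_le_one _))) (hB _)

/-- The part of the second series of `h₊⁽²⁾` where the difference quotient falls on
`f₋(S₀^{a+b} x)` with `a + b ≥ 0`. -/
lemma tendsto_series4 {G W : ℝ × ℝ → ℝ} (hG : IsTrigPoly G) (hW : IsTrigPoly W) (x : ℝ × ℝ) :
    Tendsto (fun t : ℝ => ∑' ak : ℕ × ℕ, if ak.2 + 1 ≤ ak.1 then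
        -((lamP ^ (ak.1 + 1))⁻¹ * lamM ^ ak.2 * G (S0^[ak.1] x) *
          ((W (S0z ((ak.1 : ℤ) - ak.2 - 1) (x + t • vM)) -
            W (S0z ((ak.1 : ℤ) - ak.2 - 1) x)) / t)) else 0)
      (nhdsWithin 0 (Set.Ioi 0))
      (nhds (∑' aj : ℕ × ℕ,
              if aj.2 + 1 ≤ aj.1 then
                -((lamP ^ (aj.1 + 1))⁻¹ * lamM ^ (aj.1 - 1) *
                  G (S0^[aj.1] x) * dMin W (S0^[aj.1 - (aj.2 + 1)] x))
              else 0)) := by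
  obtain ⟨A, hA0, hA⟩ := hG.bounded
  obtain ⟨B, hB0, hB⟩ := hW.quot_bound
  refine tendsto_tsum_of_dominated_convergence (summable_rr2 (A * B)) ?_ ?_
  · rintro ⟨a, k⟩
    by_cases h : k + 1 ≤ a
    · simp only [if_pos h, S0z_of_lt h, S0_iter_line]
      convert ((hW.tendsto_quot (S0^[a - (k + 1)] x) (lamM ^ (a - (k + 1)))).const_mul
        ((lamP ^ (a + 1))⁻¹ * lamM ^ k * G (S0^[a] x))).neg using 2
      rw [show a - 1 = k + (a - (k + 1)) by omega, pow_add]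
      ring
    · simp only [if_neg h]
      exact tendsto_const_nhds
  · filter_upwards [self_mem_nhdsWithin] with t ht
    rintro ⟨a, k⟩
    by_cases h : k + 1 ≤ a
    · simp only [if_pos h, S0z_of_lt h, S0_iter_line]
      rw [norm_neg, Real.norm_eq_abs]
      exact abs_prod4_le (abs_lamP_inv _) (abs_lamM_pow _).le (hA _)
        ((hB _ _ _ ht).trans (mul_le_of_le_one_right hB0 (abs_lamM_pow_le_one _)))
    · simp only [if_neg h, norm_zero]
      have := rr_pos
      positivity

/-- The terms with `a + b < 0` factor: substituting `b = -(a + j + 1)` turns the double series into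
the product of two single series. -/
lemma series_resonant {G W : ℝ × ℝ → ℝ} (hG : IsTrigPoly G) (hW : IsTrigPoly W) (x : ℝ × ℝ)
    (t : ℝ) :
    (∑' ak : ℕ × ℕ, if ak.2 + 1 ≤ ak.1 then 0 else
        -((lamP ^ (ak.1 + 1))⁻¹ * lamM ^ ak.2 * G (S0^[ak.1] x) *
          ((W (S0z ((ak.1 : ℤ) - ak.2 - 1) (x + t • vM)) -
            W (S0z ((ak.1 : ℤ) - ak.2 - 1) x)) / t))) =
      (∑' a : ℕ, (lamP ^ (a + 1))⁻¹ * (lamM ^ a * G (S0^[a] x))) *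
        (((-∑' j : ℕ, lamM ^ j * W (S0inv^[j + 1] (x + t • vM))) -
          -∑' j : ℕ, lamM ^ j * W (S0inv^[j + 1] x)) / t) := by
  have hinj : Function.Injective (fun p : ℕ × ℕ => (p.1, p.1 + p.2)) := by
    rintro ⟨a, b⟩ ⟨c, d⟩ h
    simp only [Prod.mk.injEq] at h ⊢
    omega
  have hs : ∀ y, Summable fun j : ℕ => lamM ^ j * W (S0inv^[j + 1] y) :=
    fun y => (summable_hm1 hW y).of_abs
  have hD := summable_D hG x
  rw [← hinj.tsum_eq]
  · have e : (((-∑' j : ℕ, lamM ^ j * W (S0inv^[j + 1] (x + t • vM))) -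
          -∑' j : ℕ, lamM ^ j * W (S0inv^[j + 1] x)) / t) =
        ∑' j : ℕ, -((lamM ^ j * W (S0inv^[j + 1] (x + t • vM)) -
          lamM ^ j * W (S0inv^[j + 1] x)) / t) := by
      rw [tsum_neg, tsum_div_const, (hs _).tsum_sub (hs _)]
      ring
    rw [e, tsum_mul_tsum_of_summable_norm hD
      (((hs (x + t • vM)).sub (hs x)).div_const t).neg.norm]
    refine tsum_congr fun p => ?_
    rw [if_neg (by simp), S0z_of_ge, pow_add]
    ring
  · rintro ⟨a, k⟩ h
    have hk : ¬ k + 1 ≤ a := fun hk => h (if_pos hk)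
    exact ⟨(a, k - a), by simp only [Prod.mk.injEq, true_and]; omega⟩

/-- The difference quotient of `h₊⁽¹⁾` converges at a linear rate. -/
lemma hp1_rate {u : ℝ × ℝ → ℝ} (hu : IsTrigPoly u) (x : ℝ × ℝ) :
    ∃ K, 0 ≤ K ∧ ∀ t : ℝ, 0 < t →
      |(∑' a : ℕ, (lamP ^ (a + 1))⁻¹ * (lamM ^ a * dMin u (S0^[a] x))) -
        ((∑' a : ℕ, (lamP ^ (a + 1))⁻¹ * u (S0^[a] (x + t • vM))) -
          ∑' a : ℕ, (lamP ^ (a + 1))⁻¹ * u (S0^[a] x)) / t| ≤ K * t := by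
  obtain ⟨C, hC0, hC⟩ := hu.taylor
  have hs : ∀ y, Summable fun a : ℕ => (lamP ^ (a + 1))⁻¹ * u (S0^[a] y) :=
    fun y => (summable_hp1 hu y).of_abs
  have hD := summable_D hu.dMin x
  refine ⟨C * ∑' n : ℕ, rr ^ n, mul_nonneg hC0 (tsum_nonneg fun _ => pow_nonneg rr_pos.le _),
    fun t ht => ?_⟩
  rw [← (hs _).tsum_sub (hs _), ← tsum_div_const,
    ← hD.of_norm.tsum_sub (((hs _).sub (hs _)).div_const t)]
  have hle : ∀ a : ℕ, ‖(lamP ^ (a + 1))⁻¹ * (lamM ^ a * dMin u (S0^[a] x)) -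
      ((lamP ^ (a + 1))⁻¹ * u (S0^[a] (x + t • vM)) - (lamP ^ (a + 1))⁻¹ * u (S0^[a] x)) / t‖ ≤
      (C * t) * rr ^ a := by
    intro a
    have e : (lamP ^ (a + 1))⁻¹ * (lamM ^ a * dMin u (S0^[a] x)) -
      ((lamP ^ (a + 1))⁻¹ * u (S0^[a] (x + t • vM)) - (lamP ^ (a + 1))⁻¹ * u (S0^[a] x)) / t =
      -((lamP ^ (a + 1))⁻¹ * ((u (S0^[a] x + (lamM ^ a * t) • vM) - u (S0^[a] x)
        - (lamM ^ a * t) * dMin u (S0^[a] x)) / t)) := by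
      rw [S0_iter_line]
      have := ht.ne'
      field_simp
      ring
    have h1 : |(u (S0^[a] x + (lamM ^ a * t) • vM) - u (S0^[a] x)
        - (lamM ^ a * t) * dMin u (S0^[a] x)) / t| ≤ C * t := by
      rw [abs_div, abs_of_pos ht, div_le_iff₀ ht]
      refine (hC _ _).trans ?_
      rw [mul_assoc, ← pow_two]
      refine mul_le_mul_of_nonneg_left ?_ hC0
      rw [mul_pow]
      refine mul_le_of_le_one_left (sq_nonneg t) ?_
      rw [← sq_abs]
      exact pow_le_one₀ (abs_nonneg _) (abs_lamM_pow_le_one _)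
    rw [e, norm_neg, Real.norm_eq_abs, abs_mul, mul_comm]
    exact mul_le_mul h1 (abs_lamP_inv a) (abs_nonneg _) (mul_nonneg hC0 ht.le)
  rw [← Real.norm_eq_abs]
  refine (tsum_of_norm_bounded (summable_rr.mul_left (C * t)).hasSum hle).trans (le_of_eq ?_)
  rw [tsum_mul_left]
  ring

/-- `h₋⁽¹⁾` is continuous along stable lines, although in general not differentiable there. -/
lemma tendsto_hm1 {W : ℝ × ℝ → ℝ} (hW : IsTrigPoly W) (x : ℝ × ℝ) :
    Tendsto (fun t : ℝ => (-∑' j : ℕ, lamM ^ j * W (S0inv^[j + 1] (x + t • vM))) -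
          -∑' j : ℕ, lamM ^ j * W (S0inv^[j + 1] x)) (nhdsWithin 0 (Set.Ioi 0)) (nhds 0) := by
  obtain ⟨B, hB0, hB⟩ := hW.bounded
  have h : Tendsto (fun t : ℝ => ∑' j : ℕ, lamM ^ j * W (S0inv^[j + 1] (x + t • vM)))
      (nhdsWithin 0 (Set.Ioi 0)) (nhds (∑' j : ℕ, lamM ^ j * W (S0inv^[j + 1] x))) := by
    refine tendsto_tsum_of_dominated_convergence (summable_rr.mul_right B) ?_ ?_
    · intro j
      simp only [S0inv_iter_line]
      exact (hW.tendsto _ _).const_mul _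
    · refine Eventually.of_forall fun t j => ?_
      rw [Real.norm_eq_abs, abs_mul, abs_lamM_pow]
      exact mul_le_mul_of_nonneg_left (hB _) (pow_nonneg rr_pos.le _)
  have := h.neg.sub_const (-∑' j : ℕ, lamM ^ j * W (S0inv^[j + 1] x))
  rwa [sub_self] at this

/-- The splitting of the difference quotient of the second series of `h₊⁽²⁾`. -/
lemma quot_backward {G W : ℝ × ℝ → ℝ} (hG : IsTrigPoly G) (hW : IsTrigPoly W) (x : ℝ × ℝ)
    (t : ℝ) :
    ((∑' ak : ℕ × ℕ, -((lamP ^ (ak.1 + 1))⁻¹ * lamM ^ ak.2 *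
        G (S0^[ak.1] (x + t • vM)) * W (S0z ((ak.1 : ℤ) - ak.2 - 1) (x + t • vM)))) -
      ∑' ak : ℕ × ℕ, -((lamP ^ (ak.1 + 1))⁻¹ * lamM ^ ak.2 *
        G (S0^[ak.1] x) * W (S0z ((ak.1 : ℤ) - ak.2 - 1) x))) / t =
    (∑' ak : ℕ × ℕ, -((lamP ^ (ak.1 + 1))⁻¹ * lamM ^ ak.2 *
        ((G (S0^[ak.1] (x + t • vM)) - G (S0^[ak.1] x)) / t) *
          W (S0z ((ak.1 : ℤ) - ak.2 - 1) (x + t • vM)))) +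
    (∑' ak : ℕ × ℕ, if ak.2 + 1 ≤ ak.1 then
        -((lamP ^ (ak.1 + 1))⁻¹ * lamM ^ ak.2 * G (S0^[ak.1] x) *
          ((W (S0z ((ak.1 : ℤ) - ak.2 - 1) (x + t • vM)) -
            W (S0z ((ak.1 : ℤ) - ak.2 - 1) x)) / t)) else 0) +
    (∑' ak : ℕ × ℕ, if ak.2 + 1 ≤ ak.1 then 0 else
        -((lamP ^ (ak.1 + 1))⁻¹ * lamM ^ ak.2 * G (S0^[ak.1] x) *
          ((W (S0z ((ak.1 : ℤ) - ak.2 - 1) (x + t • vM)) -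
            W (S0z ((ak.1 : ℤ) - ak.2 - 1) x)) / t))) := by
  have hs : ∀ y z, Summable fun ak : ℕ × ℕ => (lamP ^ (ak.1 + 1))⁻¹ * lamM ^ ak.2 *
      G (S0^[ak.1] y) * W (S0z ((ak.1 : ℤ) - ak.2 - 1) z) :=
    fun y z => (summable_backward hG hW y z).of_abs
  have hU : Summable fun ak : ℕ × ℕ => -((lamP ^ (ak.1 + 1))⁻¹ * lamM ^ ak.2 *
        ((G (S0^[ak.1] (x + t • vM)) - G (S0^[ak.1] x)) / t) *
          W (S0z ((ak.1 : ℤ) - ak.2 - 1) (x + t • vM))) := by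
    refine ((((hs (x + t • vM) (x + t • vM)).sub (hs x (x + t • vM))).div_const t).neg).congr
      fun ak => ?_
    ring
  have hV : Summable fun ak : ℕ × ℕ => -((lamP ^ (ak.1 + 1))⁻¹ * lamM ^ ak.2 * G (S0^[ak.1] x) *
          ((W (S0z ((ak.1 : ℤ) - ak.2 - 1) (x + t • vM)) -
            W (S0z ((ak.1 : ℤ) - ak.2 - 1) x)) / t)) := by
    refine ((((hs x (x + t • vM)).sub (hs x x)).div_const t).neg).congr fun ak => ?_
    ring
  have hV1 : Summable fun ak : ℕ × ℕ => if ak.2 + 1 ≤ ak.1 then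
        -((lamP ^ (ak.1 + 1))⁻¹ * lamM ^ ak.2 * G (S0^[ak.1] x) *
          ((W (S0z ((ak.1 : ℤ) - ak.2 - 1) (x + t • vM)) -
            W (S0z ((ak.1 : ℤ) - ak.2 - 1) x)) / t)) else 0 := by
    refine Summable.of_norm_bounded hV.norm fun ak => ?_
    split_ifs
    · exact le_rfl
    · rw [norm_zero]; exact norm_nonneg _
  have hV2 : Summable fun ak : ℕ × ℕ => if ak.2 + 1 ≤ ak.1 then 0 else
        -((lamP ^ (ak.1 + 1))⁻¹ * lamM ^ ak.2 * G (S0^[ak.1] x) *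
          ((W (S0z ((ak.1 : ℤ) - ak.2 - 1) (x + t • vM)) -
            W (S0z ((ak.1 : ℤ) - ak.2 - 1) x)) / t)) := by
    refine Summable.of_norm_bounded hV.norm fun ak => ?_
    split_ifs
    · rw [norm_zero]; exact norm_nonneg _
    · exact le_rfl
  rw [← hU.tsum_add hV1, ← (hU.add hV1).tsum_add hV2,
    ← (hs (x + t • vM) (x + t • vM)).neg.tsum_sub (hs x x).neg, ← tsum_div_const]
  refine tsum_congr fun ak => ?_
  split_ifs <;> ring

theorem stmt10
    (f : ℝ × ℝ → ℝ × ℝ)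
    (hf1 : IsTrigPoly (fun p => (f p).1)) (hf2 : IsTrigPoly (fun p => (f p).2)) :
    -- the series defining h₊⁽¹⁾, h₋⁽¹⁾ and h₊⁽²⁾ converge absolutely
    (∀ y : ℝ × ℝ, Summable fun a : ℕ => |(lamP ^ (a + 1))⁻¹ * fP f (S0^[a] y)|) ∧
    (∀ y : ℝ × ℝ, Summable fun j : ℕ => |lamM ^ j * fM f (S0inv^[j + 1] y)|) ∧
    (∀ y : ℝ × ℝ, Summable fun ab : ℕ × ℕ =>
      |(lamP ^ (ab.1 + 1))⁻¹ * (lamP ^ (ab.2 + 1))⁻¹ *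
        dPlu (fP f) (S0^[ab.1] y) * fP f (S0^[ab.1 + ab.2] y)|) ∧
    (∀ y : ℝ × ℝ, Summable fun ak : ℕ × ℕ =>
      |(lamP ^ (ak.1 + 1))⁻¹ * lamM ^ ak.2 *
        dMin (fP f) (S0^[ak.1] y) * fM f (S0z ((ak.1 : ℤ) - ak.2 - 1) y)|) ∧
    ∀ x : ℝ × ℝ,
      -- the four limiting series converge absolutely …
      (Summable fun ab : ℕ × ℕ =>
        |(lamP ^ (ab.1 + 1))⁻¹ * (lamP ^ (ab.2 + 1))⁻¹ * lamM ^ ab.1 *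
          dMin (dPlu (fP f)) (S0^[ab.1] x) * fP f (S0^[ab.1 + ab.2] x)|) ∧
      (Summable fun ab : ℕ × ℕ =>
        |(lamP ^ (ab.1 + 1))⁻¹ * (lamP ^ (ab.2 + 1))⁻¹ * lamM ^ (ab.1 + ab.2) *
          dPlu (fP f) (S0^[ab.1] x) * dMin (fP f) (S0^[ab.1 + ab.2] x)|) ∧
      (Summable fun ak : ℕ × ℕ =>
        |(lamP ^ (ak.1 + 1))⁻¹ * lamM ^ ak.2 * lamM ^ ak.1 *
          dMin (dMin (fP f)) (S0^[ak.1] x) * fM f (S0z ((ak.1 : ℤ) - ak.2 - 1) x)|) ∧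
      (Summable fun aj : ℕ × ℕ =>
        |if aj.2 + 1 ≤ aj.1 then
            -((lamP ^ (aj.1 + 1))⁻¹ * lamM ^ (aj.1 - 1) *
              dMin (fP f) (S0^[aj.1] x) * dMin (fM f) (S0^[aj.1 - (aj.2 + 1)] x))
          else 0|) ∧
      -- … and the limit of `Δ_t h₊⁽²⁾(x) − Δ_t h₊⁽¹⁾(x) · Δ_t h₋⁽¹⁾(x)` as `t → 0⁺`
      -- exists and equals their sum
      Filter.Tendsto
        (fun t : ℝ =>
          (hp2 f (x + t • vM) - hp2 f x) / t -
            (hp1 f (x + t • vM) - hp1 f x) / t * ((hm1 f (x + t • vM) - hm1 f x) / t))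
        (nhdsWithin 0 (Set.Ioi 0))
        (nhds
          ((∑' ab : ℕ × ℕ, (lamP ^ (ab.1 + 1))⁻¹ * (lamP ^ (ab.2 + 1))⁻¹ * lamM ^ ab.1 *
              dMin (dPlu (fP f)) (S0^[ab.1] x) * fP f (S0^[ab.1 + ab.2] x)) +
           (∑' ab : ℕ × ℕ, (lamP ^ (ab.1 + 1))⁻¹ * (lamP ^ (ab.2 + 1))⁻¹ * lamM ^ (ab.1 + ab.2) *
              dPlu (fP f) (S0^[ab.1] x) * dMin (fP f) (S0^[ab.1 + ab.2] x)) +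
           (∑' ak : ℕ × ℕ, -((lamP ^ (ak.1 + 1))⁻¹ * lamM ^ ak.2 * lamM ^ ak.1 *
              dMin (dMin (fP f)) (S0^[ak.1] x) * fM f (S0z ((ak.1 : ℤ) - ak.2 - 1) x))) +
           (∑' aj : ℕ × ℕ,
              if aj.2 + 1 ≤ aj.1 then
                -((lamP ^ (aj.1 + 1))⁻¹ * lamM ^ (aj.1 - 1) *
                  dMin (fP f) (S0^[aj.1] x) * dMin (fM f) (S0^[aj.1 - (aj.2 + 1)] x))
              else 0))) := by
  have hP : IsTrigPoly (fP f) := isTrigPoly_dot hf1 hf2 vP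
  have hM : IsTrigPoly (fM f) := isTrigPoly_dot hf1 hf2 vM
  refine ⟨summable_hp1 hP, summable_hm1 hM, summable_forward hP.dPlu hP,
    fun y => summable_backward hP.dMin hM y y, fun x =>
    ⟨summable_series1 hP.dPlu.dMin hP x, summable_series2 hP.dPlu hP.dMin x,
      summable_series3 hP.dMin.dMin hM x, summable_series4 hP.dMin hM.dMin x, ?_⟩⟩
  have h12 := tendsto_forward hP.dPlu hP x
  have h3 := tendsto_series3 hP.dMin hM x
  have h4 := tendsto_series4 hP.dMin hM x
  -- The leftover product `(∂₋h₊⁽¹⁾ - Δ_t h₊⁽¹⁾) · Δ_t h₋⁽¹⁾`: the first factor is `O(t)`, and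
  -- `t · Δ_t h₋⁽¹⁾ → 0` by continuity.
  have h5 : Tendsto (fun t : ℝ =>
      ((∑' a : ℕ, (lamP ^ (a + 1))⁻¹ * (lamM ^ a * dMin (fP f) (S0^[a] x))) -
        (hp1 f (x + t • vM) - hp1 f x) / t) * ((hm1 f (x + t • vM) - hm1 f x) / t))
      (nhdsWithin 0 (Set.Ioi 0)) (nhds 0) := by
    obtain ⟨K, hK0, hK⟩ := hp1_rate hP x
    have hlim := (tendsto_hm1 hM x).abs.const_mul K
    rw [abs_zero, mul_zero] at hlim
    refine squeeze_zero_norm' ?_ hlim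
    filter_upwards [self_mem_nhdsWithin] with t ht
    have ht' : (0 : ℝ) < t := ht
    rw [Real.norm_eq_abs, abs_mul, abs_div, abs_of_pos ht']
    refine (mul_le_mul_of_nonneg_right (hK t ht') (by positivity)).trans (le_of_eq ?_)
    rw [mul_assoc, mul_div_cancel₀ _ ht'.ne']
    rfl
  have hall := ((h12.add h3).add h4).add h5
  rw [add_zero] at hall
  refine hall.congr fun t => ?_
  have hb := quot_backward hP.dMin hM x t
  rw [series_resonant hP.dMin hM x t] at hb
  have e2 : (hp2 f (x + t • vM) - hp2 f x) / t =
      ((∑' ab : ℕ × ℕ, (lamP ^ (ab.1 + 1))⁻¹ * (lamP ^ (ab.2 + 1))⁻¹ *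
          dPlu (fP f) (S0^[ab.1] (x + t • vM)) * fP f (S0^[ab.1 + ab.2] (x + t • vM))) -
        ∑' ab : ℕ × ℕ, (lamP ^ (ab.1 + 1))⁻¹ * (lamP ^ (ab.2 + 1))⁻¹ *
          dPlu (fP f) (S0^[ab.1] x) * fP f (S0^[ab.1 + ab.2] x)) / t +
      ((∑' ak : ℕ × ℕ, -((lamP ^ (ak.1 + 1))⁻¹ * lamM ^ ak.2 *
        dMin (fP f) (S0^[ak.1] (x + t • vM)) *
          fM f (S0z ((ak.1 : ℤ) - ak.2 - 1) (x + t • vM)))) -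
      ∑' ak : ℕ × ℕ, -((lamP ^ (ak.1 + 1))⁻¹ * lamM ^ ak.2 *
        dMin (fP f) (S0^[ak.1] x) * fM f (S0z ((ak.1 : ℤ) - ak.2 - 1) x))) / t := by
    unfold hp2
    ring
  rw [e2, hb]
  unfold hp1 hm1
  ring
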